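/- Let P = [a] × [2b] with the described partial order, 1 ≤ t ≤ a-1. The maximal subsets of P containing no (t+1)-chain are exactly the disjoint unions F_1 ∪ ... ∪ F_t of t pairwise disjoint maximal antichains (paths from (1,b+h_i) to (a,h_i)) of P. -/

import Mathlib

/-- A step moves one unit down `(1,0)` or one unit left `(0,-1)`. -/
def Step (p q : ℤ × ℤ) : Prop := q = p + (1, 0) ∨ q = p + (0, -1)

/-- `l` is a path starting at `p` and ending at `q`, each consecutive
difference being `(1,0)` or `(0,-1)`. -/
def IsPathFromTo (l : List (ℤ × ℤ)) (p q : ℤ × ℤ) : Prop :=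
  l.Chain' Step ∧ l.head? = some p ∧ l.getLast? = some q

/-- Membership in the poset `P = [a] × [2b]`, viewed inside `ℤ × ℤ`. -/
def memP (a b : ℕ) (p : ℤ × ℤ) : Prop :=
  1 ≤ p.1 ∧ p.1 ≤ (a : ℤ) ∧ 1 ≤ p.2 ∧ p.2 ≤ 2 * (b : ℤ)

/-- The partial order on `P = [a] × [2b]`:
`(x,y) ⪯ (z,t)` iff `(x,y) = (z,t)`, or `x < z` and `y < t`,
or `y ≤ b`, `t ≥ b+1` and `y < t - b`. -/
def ple (b : ℕ) (p q : ℤ × ℤ) : Prop :=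
  p = q ∨ (p.1 < q.1 ∧ p.2 < q.2) ∨
    (p.2 ≤ (b : ℤ) ∧ (b : ℤ) + 1 ≤ q.2 ∧ p.2 < q.2 - (b : ℤ))

/-- The strict part of the order. -/
def slt (b : ℕ) (p q : ℤ × ℤ) : Prop :=
  (p.1 < q.1 ∧ p.2 < q.2) ∨ (p.2 ≤ (b : ℤ) ∧ (b : ℤ) + 1 ≤ q.2 ∧ p.2 < q.2 - (b : ℤ))

theorem ple_of_slt {b : ℕ} {p q : ℤ × ℤ} (h : slt b p q) : ple b p q := Or.inr h

theorem slt_trans {b : ℕ} {p q r : ℤ × ℤ} (h : slt b p q) (h' : slt b q r) : slt b p r := by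
  unfold slt at *; omega

theorem slt_ne {b : ℕ} {p q : ℤ × ℤ} (h : slt b p q) : p ≠ q := by
  rintro rfl; unfold slt at h; omega

theorem slt_weak {b : ℕ} {p q r : ℤ × ℤ} (h : slt b p q) (h1 : q.1 ≤ r.1) (h2 : q.2 ≤ r.2) :
    slt b p r := by
  unfold slt at *; omega

/-- Row description of a path. -/
def Row (a : ℕ) (G : ℤ → ℤ) (p : ℤ × ℤ) : Prop :=
  1 ≤ p.1 ∧ p.1 ≤ (a : ℤ) ∧ G (p.1 + 1) ≤ p.2 ∧ p.2 ≤ G p.1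

theorem path_rows (q : ℤ × ℤ) (l : List (ℤ × ℤ)) : ∀ p : ℤ × ℤ, IsPathFromTo l p q →
    ∃ G : ℤ → ℤ, Antitone G ∧ G p.1 = p.2 ∧ G (q.1 + 1) = q.2 ∧ p.1 ≤ q.1 ∧
      ∀ x : ℤ × ℤ, x ∈ l ↔ (p.1 ≤ x.1 ∧ x.1 ≤ q.1 ∧ G (x.1 + 1) ≤ x.2 ∧ x.2 ≤ G x.1) := by
  induction l with
  | nil => intro p h; simp [IsPathFromTo] at h
  | cons u l ih =>
    intro p h
    obtain ⟨hc, hh, hl⟩ := h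
    simp only [List.head?_cons, Option.some.injEq] at hh
    subst hh
    cases l with
    | nil =>
      simp at hl
      subst hl
      refine ⟨fun _ => u.2, fun _ _ _ => le_rfl, rfl, rfl, le_rfl, fun x => ?_⟩
      simp only [List.mem_singleton, Prod.ext_iff]
      omega
    | cons v l =>
      have hc' := List.isChain_cons_cons.1 hc
      obtain ⟨G, hG, h1, h2, h3, h4⟩ := ih v ⟨hc'.2, rfl, by simpa using hl⟩
      have hs := hc'.1
      simp only [Step, Prod.ext_iff, Prod.fst_add, Prod.snd_add] at hs
      refine ⟨fun x => if x ≤ u.1 then u.2 else G x, ?_, ?_, ?_, ?_, ?_⟩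
      · intro x y hxy
        have e1 := hG hxy
        have e2 : u.1 < y → G y ≤ G (u.1 + 1) := fun h => hG (by omega)
        have e3 := hG (show u.1 ≤ u.1 + 1 by omega)
        dsimp only
        split_ifs
        · omega
        · omega
        · rcases hs with hs | hs
          · have : v.1 = u.1 + 1 := by omega
            rw [this] at h1
            omega
          · have : v.1 = u.1 := by omega
            rw [this] at h1
            omega
        · omega
      · simp
      · dsimp only
        rw [if_neg (by omega), h2]
      · omega
      · intro x
        rw [List.mem_cons, h4]
        have e3 := hG (show u.1 ≤ u.1 + 1 by omega)
        dsimp only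
        rw [Prod.ext_iff]
        rcases lt_trichotomy x.1 u.1 with hx | hx | hx
        · omega
        · rw [hx, if_neg (by omega), if_pos le_rfl]
          rcases hs with hs | hs
          · have : v.1 = u.1 + 1 := by omega
            rw [this] at h1 h3
            omega
          · have : v.1 = u.1 := by omega
            rw [this] at h1 h3
            omega
        · rw [if_neg (by omega), if_neg (by omega)]
          omega

theorem rows_path (G : ℤ → ℤ) (hG : Antitone G) (x1 : ℤ) (n : ℕ) : ∀ x0 y0 : ℤ, x0 ≤ x1 →
    G (x0 + 1) ≤ y0 → (x1 - x0) + (y0 - G (x1 + 1)) ≤ n →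
    ∃ l : List (ℤ × ℤ), IsPathFromTo l (x0, y0) (x1, G (x1 + 1)) ∧
      ∀ x : ℤ × ℤ, x ∈ l ↔ (x.1 = x0 ∧ G (x0 + 1) ≤ x.2 ∧ x.2 ≤ y0) ∨
        (x0 < x.1 ∧ x.1 ≤ x1 ∧ G (x.1 + 1) ≤ x.2 ∧ x.2 ≤ G x.1) := by
  induction n with
  | zero =>
    intro x0 y0 h1 h2 h3
    have := hG (show x0 + 1 ≤ x1 + 1 by omega)
    have e : x0 = x1 := by push_cast at h3; omega
    subst e
    have e : y0 = G (x0 + 1) := by push_cast at h3; omega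
    subst e
    refine ⟨[(x0, G (x0 + 1))], ⟨List.isChain_singleton _, rfl, rfl⟩, fun x => ?_⟩
    simp only [List.mem_singleton, Prod.ext_iff]
    omega
  | succ n ih =>
    intro x0 y0 h1 h2 h3
    push_cast at h3
    by_cases hy : G (x0 + 1) < y0
    · obtain ⟨l, ⟨hc, hh, hl⟩, hm⟩ := ih x0 (y0 - 1) h1 (by omega) (by omega)
      refine ⟨(x0, y0) :: l, ⟨?_, rfl, ?_⟩, fun x => ?_⟩
      · refine List.isChain_cons.2 ⟨?_, hc⟩
        intro y hy'
        rw [hh] at hy'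
        simp at hy'
        subst hy'
        right
        simp [Prod.ext_iff]
        omega
      · cases l with
        | nil => simp at hh
        | cons v l => simpa using hl
      · rw [List.mem_cons, hm, Prod.ext_iff]
        dsimp only
        omega
    · have e : y0 = G (x0 + 1) := by omega
      subst e
      rcases h1.eq_or_lt with e | hx
      · subst e
        refine ⟨[(x0, G (x0 + 1))], ⟨List.isChain_singleton _, rfl, rfl⟩, fun x => ?_⟩
        simp only [List.mem_singleton, Prod.ext_iff]
        omega
      · have e3 := hG (show x0 + 1 ≤ x0 + 1 + 1 by omega)
        obtain ⟨l, ⟨hc, hh, hl⟩, hm⟩ := ih (x0 + 1) (G (x0 + 1)) (by omega) e3 (by omega)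
        refine ⟨(x0, G (x0 + 1)) :: l, ⟨?_, rfl, ?_⟩, fun x => ?_⟩
        · refine List.isChain_cons.2 ⟨?_, hc⟩
          intro y hy'
          rw [hh] at hy'
          simp at hy'
          subst hy'
          left
          simp [Prod.ext_iff]
        · cases l with
          | nil => simp at hh
          | cons v l => simpa using hl
        · rw [List.mem_cons, hm, Prod.ext_iff]
          dsimp only
          by_cases e : x.1 = x0 + 1
          · rw [e]; omega
          · omega

theorem row_antichain {a b : ℕ} {h : ℤ} {G : ℤ → ℤ} (hG : Antitone G) (h1 : G 1 = b + h)
    (h2 : G (a + 1) = h) {p q : ℤ × ℤ} (hp : Row a G p) (hq : Row a G q) (hpq : p ≠ q) :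
    ¬ ple b p q := by
  obtain ⟨p1, p2, p3, p4⟩ := hp
  obtain ⟨q1, q2, q3, q4⟩ := hq
  rintro (h | h | h)
  · exact hpq h
  · have := hG (show p.1 + 1 ≤ q.1 by omega)
    omega
  · have e1 := hG (show p.1 + 1 ≤ (a : ℤ) + 1 by omega)
    have e2 := hG (show 1 ≤ q.1 by omega)
    omega

theorem row_memP {a b : ℕ} {h : ℤ} {G : ℤ → ℤ} (hG : Antitone G) (h1 : G 1 = b + h)
    (h2 : G (a + 1) = h) (hh : 1 ≤ h ∧ h ≤ b) {p : ℤ × ℤ} (hp : Row a G p) : memP a b p := by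
  obtain ⟨p1, p2, p3, p4⟩ := hp
  have e1 := hG (show p.1 + 1 ≤ (a : ℤ) + 1 by omega)
  have e2 := hG (show 1 ≤ p.1 by omega)
  refine ⟨p1, p2, ?_, ?_⟩ <;> omega

theorem union_no_chain {a b t : ℕ} {h : Fin t → ℤ} {G : Fin t → ℤ → ℤ}
    (hG : ∀ i, Antitone (G i)) (h1 : ∀ i, G i 1 = b + h i) (h2 : ∀ i, G i (a + 1) = h i)
    (c : Finset (ℤ × ℤ)) (hc : ∀ p ∈ c, ∃ i, Row a (G i) p)
    (hch : IsChain (ple b) (c : Set (ℤ × ℤ))) : c.card ≤ t := by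
  by_contra hlt
  push Not at hlt
  have : Nonempty (Fin t) := by
    obtain ⟨p, hp⟩ : c.Nonempty := Finset.card_pos.1 (by omega)
    exact ⟨(hc p hp).choose⟩
  choose! f hf using hc
  obtain ⟨p, hp, q, hq, hne, he⟩ := Finset.exists_ne_map_eq_of_card_lt_of_maps_to
    (s := c) (t := (Finset.univ : Finset (Fin t))) (f := f) (by simpa using hlt) (by simp)
  have r1 := hf p hp
  have r2 := hf q hq
  rw [← he] at r2
  rcases hch hp hq hne with h | h
  · exact row_antichain (hG _) (h1 _) (h2 _) r1 r2 hne h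
  · exact row_antichain (hG _) (h1 _) (h2 _) r2 r1 hne.symm h

theorem row_below {a b : ℕ} {h : ℤ} {G : ℤ → ℤ} (hG : Antitone G) (ha : 1 ≤ a) (h1 : G 1 = b + h)
    (h2 : G (a + 1) = h) (hh : 1 ≤ h ∧ h ≤ b) {p : ℤ × ℤ} (hp : memP a b p) (hy : G p.1 < p.2) :
    ∃ q, Row a G q ∧ slt b q p := by
  obtain ⟨p1, p2, p3, p4⟩ := hp
  rcases p1.eq_or_lt with e | hx
  · rw [← e] at hy
    refine ⟨((a : ℤ), h), ⟨?_, le_rfl, ?_, ?_⟩, Or.inr ⟨?_, ?_, ?_⟩⟩ <;> try dsimp only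
    · omega
    · omega
    · have := hG (show (a : ℤ) ≤ a + 1 by omega)
      omega
    all_goals omega
  · refine ⟨(p.1 - 1, G p.1), ⟨?_, ?_, ?_, ?_⟩, Or.inl ⟨?_, ?_⟩⟩ <;> dsimp only
    · omega
    · omega
    · rw [sub_add_cancel]
    · exact hG (by omega)
    · omega
    · omega

theorem row_above {a b : ℕ} {h : ℤ} {G : ℤ → ℤ} (hG : Antitone G) (ha : 1 ≤ a) (h1 : G 1 = b + h)
    (h2 : G (a + 1) = h) (hh : 1 ≤ h ∧ h ≤ b) {p : ℤ × ℤ} (hp : memP a b p)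
    (hy : p.2 < G (p.1 + 1)) :
    ∃ q, Row a G q ∧ slt b p q := by
  obtain ⟨p1, p2, p3, p4⟩ := hp
  rcases p2.eq_or_lt with e | hx
  · rw [e] at hy
    refine ⟨(1, b + h), ⟨le_rfl, ?_, ?_, ?_⟩, Or.inr ⟨?_, ?_, ?_⟩⟩ <;> try dsimp only
    · omega
    · rw [← h1]; exact hG (by omega)
    · omega
    all_goals omega
  · refine ⟨(p.1 + 1, G (p.1 + 1)), ⟨?_, ?_, ?_, ?_⟩, Or.inl ⟨?_, ?_⟩⟩ <;> dsimp only
    · omega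
    · omega
    · exact hG (by omega)
    · exact le_rfl
    · omega
    · omega

theorem chain_insert {b : ℕ} {c : Finset (ℤ × ℤ)} {p : ℤ × ℤ}
    (hc : IsChain (ple b) (c : Set (ℤ × ℤ))) (h : ∀ q ∈ c, slt b q p ∨ slt b p q) :
    p ∉ c ∧ IsChain (ple b) ((insert p c : Finset (ℤ × ℤ)) : Set (ℤ × ℤ)) := by
  refine ⟨fun hp => ?_, ?_⟩
  · rcases h p hp with h | h <;> exact slt_ne h rfl
  · rw [Finset.coe_insert]
    refine hc.insert fun q hq _ => ?_
    rcases h q hq with h | h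
    · exact Or.inr (ple_of_slt h)
    · exact Or.inl (ple_of_slt h)

theorem rows_sep {a t : ℕ} {G : Fin t → ℤ → ℤ} (hG : ∀ i, Antitone (G i))
    (hd : ∀ i j, i ≠ j → ∀ p, Row a (G i) p → ¬ Row a (G j) p) {i j : Fin t} (hij : i ≠ j)
    (h1 : G i 1 < G j 1) (n : ℕ) :
    (n : ℤ) + 1 ≤ a → G i ((n : ℤ) + 1) < G j ((n : ℤ) + 1) ∧
      G i ((n : ℤ) + 1) < G j ((n : ℤ) + 1 + 1) := by
  have key : ∀ x : ℤ, 1 ≤ x → x ≤ a → G i x < G j x → G i x < G j (x + 1) := by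
    intro x hx hxa hlt
    by_contra hcon
    push Not at hcon
    exact hd i j hij (x, G i x) ⟨hx, hxa, hG i (by dsimp only; omega), le_rfl⟩
      ⟨hx, hxa, hcon, hlt.le⟩
  induction n with
  | zero =>
    intro h
    simp only [Nat.cast_zero, zero_add] at *
    exact ⟨h1, key 1 le_rfl h h1⟩
  | succ n ih =>
    intro h
    push_cast at *
    have e := (ih (by omega)).2
    have e2 := hG i (show (n : ℤ) + 1 ≤ n + 1 + 1 by omega)
    have e3 : G i ((n : ℤ) + 1 + 1) < G j ((n : ℤ) + 1 + 1) := by omega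
    exact ⟨e3, key _ (by omega) h e3⟩

theorem union_maximal {a b t : ℕ} (ha : 1 ≤ a) {h : Fin t → ℤ} {G : Fin t → ℤ → ℤ}
    (hh : ∀ i, 1 ≤ h i ∧ h i ≤ b) (hmono : StrictMono h)
    (hG : ∀ i, Antitone (G i)) (h1 : ∀ i, G i 1 = b + h i) (h2 : ∀ i, G i (a + 1) = h i)
    (hd : ∀ i j, i ≠ j → ∀ p, Row a (G i) p → ¬ Row a (G j) p)
    (p : ℤ × ℤ) (hp : memP a b p) (hn : ∀ i, ¬ Row a (G i) p) :
    ∃ c : Finset (ℤ × ℤ), c.card = t + 1 ∧ IsChain (ple b) (c : Set (ℤ × ℤ)) ∧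
      ∀ q ∈ c, q = p ∨ ∃ i, Row a (G i) q := by
  have sep : ∀ i j, i < j → ∀ x : ℤ, 1 ≤ x → x ≤ a → G i x < G j (x + 1) := by
    intro i j hij x hx hxa
    have := rows_sep hG hd hij.ne (by rw [h1, h1]; have := hmono hij; omega) (x - 1).toNat
      (by omega)
    have e : ((x - 1).toNat : ℤ) + 1 = x := by omega
    rw [e] at this
    exact this.2
  have down : ∀ n : ℕ, n ≤ t → ∀ p, memP a b p → (∀ i : Fin t, (i : ℕ) < n → G i p.1 < p.2) →
      ∃ c : Finset (ℤ × ℤ), c.card = n ∧ IsChain (ple b) (c : Set (ℤ × ℤ)) ∧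
        ∀ q ∈ c, slt b q p ∧ ∃ i, Row a (G i) q := by
    intro n
    induction n with
    | zero => intro _ p _ _; exact ⟨∅, by simp⟩
    | succ n ih =>
      intro hnt p hp hab
      obtain ⟨q, hq, hqp⟩ := row_below (hG ⟨n, hnt⟩) ha (h1 _) (h2 _) (hh _) hp
        (hab ⟨n, hnt⟩ (by simp))
      obtain ⟨c, hc, hcc, hcq⟩ := ih (by omega) q (row_memP (hG _) (h1 _) (h2 _) (hh _) hq) (by
        intro i hi
        have := sep i ⟨n, hnt⟩ (by simpa [Fin.lt_def] using hi) q.1 hq.1 hq.2.1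
        have := hq.2.2.1
        omega)
      obtain ⟨hni, hci⟩ := chain_insert hcc (p := q) fun r hr => Or.inl (hcq r hr).1
      refine ⟨insert q c, by rw [Finset.card_insert_of_notMem hni, hc], hci, ?_⟩
      intro r hr
      rcases Finset.mem_insert.1 hr with rfl | hr
      · exact ⟨hqp, _, hq⟩
      · exact ⟨slt_trans (hcq r hr).1 hqp, (hcq r hr).2⟩
  have up : ∀ n : ℕ, n ≤ t → ∀ p, memP a b p →
      (∀ i : Fin t, t - n ≤ (i : ℕ) → p.2 < G i (p.1 + 1)) →
      ∃ c : Finset (ℤ × ℤ), c.card = n ∧ IsChain (ple b) (c : Set (ℤ × ℤ)) ∧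
        ∀ q ∈ c, slt b p q ∧ ∃ i, Row a (G i) q := by
    intro n
    induction n with
    | zero => intro _ p _ _; exact ⟨∅, by simp⟩
    | succ n ih =>
      intro hnt p hp hab
      have hlt : t - (n + 1) < t := by omega
      obtain ⟨q, hq, hqp⟩ := row_above (hG ⟨t - (n + 1), hlt⟩) ha (h1 _) (h2 _) (hh _) hp
        (hab ⟨t - (n + 1), hlt⟩ (by simp))
      obtain ⟨c, hc, hcc, hcq⟩ := ih (by omega) q (row_memP (hG _) (h1 _) (h2 _) (hh _) hq) (by
        intro i hi
        have := sep ⟨t - (n + 1), hlt⟩ i (by rw [Fin.lt_def]; dsimp only; omega) q.1 hq.1 hq.2.1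
        have := hq.2.2.2
        omega)
      obtain ⟨hni, hci⟩ := chain_insert hcc (p := q) fun r hr => Or.inr (hcq r hr).1
      refine ⟨insert q c, by rw [Finset.card_insert_of_notMem hni, hc], hci, ?_⟩
      intro r hr
      rcases Finset.mem_insert.1 hr with rfl | hr
      · exact ⟨hqp, _, hq⟩
      · exact ⟨slt_trans hqp (hcq r hr).1, (hcq r hr).2⟩
  have cut : ∀ n : ℕ, n ≤ t → ∃ k ≤ n, ∀ i : Fin t, (i : ℕ) < n →
      ((i : ℕ) < k → G i p.1 < p.2) ∧ (k ≤ (i : ℕ) → p.2 < G i (p.1 + 1)) := by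
    intro n
    induction n with
    | zero => intro _; exact ⟨0, le_rfl, fun i hi => by omega⟩
    | succ n ih =>
      intro hnt
      obtain ⟨k, hk, hki⟩ := ih (by omega)
      by_cases hab : G ⟨n, hnt⟩ p.1 < p.2
      · refine ⟨n + 1, le_rfl, fun i hi => ⟨fun _ => ?_, fun _ => by omega⟩⟩
        rcases (Nat.lt_succ_iff.1 hi).eq_or_lt with e | hlt
        · have : i = ⟨n, hnt⟩ := Fin.ext e
          rw [this]; exact hab
        · have e1 := sep i ⟨n, hnt⟩ (by rw [Fin.lt_def]; exact hlt) p.1 hp.1 hp.2.1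
          have e2 := hG ⟨n, hnt⟩ (show p.1 ≤ p.1 + 1 by omega)
          omega
      · refine ⟨k, by omega, fun i hi => ?_⟩
        rcases (Nat.lt_succ_iff.1 hi).eq_or_lt with e | hlt
        · refine ⟨fun _ => by omega, fun _ => ?_⟩
          have : i = ⟨n, hnt⟩ := Fin.ext e
          rw [this]
          by_contra hcon
          exact hn ⟨n, hnt⟩ ⟨hp.1, hp.2.1, by omega, by omega⟩
        · exact hki i hlt
  obtain ⟨k, hk, hki⟩ := cut t le_rfl
  obtain ⟨c, c1, c2, c3⟩ := down k hk p hp fun i hi => (hki i i.2).1 hi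
  obtain ⟨d, d1, d2, d3⟩ := up (t - k) (by omega) p hp fun i hi => (hki i i.2).2 (by omega)
  have hdisj : Disjoint c d := by
    rw [Finset.disjoint_left]
    intro q hq hq'
    exact slt_ne (slt_trans (c3 q hq).1 (d3 q hq').1) rfl
  have hcd : IsChain (ple b) ((c ∪ d : Finset (ℤ × ℤ)) : Set (ℤ × ℤ)) := by
    intro x hx y hy hne
    rw [Finset.mem_coe, Finset.mem_union] at hx hy
    rcases hx with hx | hx <;> rcases hy with hy | hy
    · exact c2 hx hy hne
    · exact Or.inl (ple_of_slt (slt_trans (c3 x hx).1 (d3 y hy).1))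
    · exact Or.inr (ple_of_slt (slt_trans (c3 y hy).1 (d3 x hx).1))
    · exact d2 hx hy hne
  obtain ⟨hni, hci⟩ := chain_insert hcd (p := p) (by
    intro q hq
    rcases Finset.mem_union.1 hq with hq | hq
    · exact Or.inl (c3 q hq).1
    · exact Or.inr (d3 q hq).1)
  refine ⟨insert p (c ∪ d), ?_, hci, ?_⟩
  · rw [Finset.card_insert_of_notMem hni, Finset.card_union_of_disjoint hdisj]
    omega
  · intro q hq
    rcases Finset.mem_insert.1 hq with rfl | hq
    · exact Or.inl rfl
    · rcases Finset.mem_union.1 hq with hq | hq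
      · exact Or.inr (c3 q hq).2
      · exact Or.inr (d3 q hq).2

/-- Points too close to the top for level `i`. -/
def Cap (a b t : ℕ) (i : ℕ) (p : ℤ × ℤ) : Prop :=
  2 * (b : ℤ) - ((t : ℤ) - i) + 1 ≤ p.2 ∨
    ((a : ℤ) - ((t : ℤ) - i) + 1 ≤ p.1 ∧ (b : ℤ) - ((t : ℤ) - i) + 1 ≤ p.2)

/-- Region strictly above the `i`-th path. -/
def W (a b t : ℕ) (S : Set (ℤ × ℤ)) : ℕ → (ℤ × ℤ) → Prop
  | 0, _ => True
  | i + 1, p => (∃ q ∈ S, W a b t S i q ∧ slt b q p) ∨ Cap a b t (i + 1) p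

section
variable {a b t : ℕ} {S : Set (ℤ × ℤ)}

theorem W_weak {i : ℕ} {p q : ℤ × ℤ} (h : W a b t S i p) (h1 : p.1 ≤ q.1) (h2 : p.2 ≤ q.2) :
    W a b t S i q := by
  cases i with
  | zero => trivial
  | succ i =>
    rcases h with ⟨r, hr, hW, hs⟩ | h
    · exact Or.inl ⟨r, hr, hW, slt_weak hs h1 h2⟩
    · right; unfold Cap at *; omega

theorem W_succ {i : ℕ} : ∀ {p : ℤ × ℤ}, W a b t S (i + 1) p → W a b t S i p := by
  induction i with
  | zero => intro p _; trivial
  | succ i ih =>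
    intro p h
    rcases h with ⟨r, hr, hW, hs⟩ | h
    · exact Or.inl ⟨r, hr, ih hW, hs⟩
    · right; unfold Cap at *; push_cast at *; omega

theorem W_anti {i j : ℕ} (hij : i ≤ j) {p : ℤ × ℤ} (h : W a b t S j p) : W a b t S i p := by
  induction hij with
  | refl => exact h
  | step _ ih => exact ih (W_succ h)

theorem W_chain (hS : ∀ p ∈ S, memP a b p) {i : ℕ} : ∀ {p : ℤ × ℤ}, memP a b p → W a b t S i p →
    Cap a b t i p ∨ ∃ c : Finset (ℤ × ℤ), c.card = i ∧ IsChain (ple b) (c : Set (ℤ × ℤ)) ∧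
      ∀ q ∈ c, slt b q p ∧ q ∈ S := by
  induction i with
  | zero => intro p _ _; exact Or.inr ⟨∅, by simp⟩
  | succ i ih =>
    intro p hp h
    rcases h with ⟨q, hq, hW, hs⟩ | h
    · rcases ih (hS q hq) hW with h | ⟨c, c1, c2, c3⟩
      · left
        unfold Cap slt memP at *; push_cast at *; omega
      · right
        obtain ⟨hni, hci⟩ := chain_insert c2 (p := q) fun r hr => Or.inl (c3 r hr).1
        refine ⟨insert q c, by rw [Finset.card_insert_of_notMem hni, c1], hci, ?_⟩
        intro r hr
        rcases Finset.mem_insert.1 hr with rfl | hr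
        · exact ⟨hs, hq⟩
        · exact ⟨slt_trans (c3 r hr).1 hs, (c3 r hr).2⟩
    · exact Or.inl h

theorem W_top (hS : ∀ p ∈ S, memP a b p)
    (hc : ∀ c : Finset (ℤ × ℤ), (c : Set (ℤ × ℤ)) ⊆ S → IsChain (ple b) (c : Set (ℤ × ℤ)) →
        c.card ≤ t) {p : ℤ × ℤ} (hp : p ∈ S) : ¬ W a b t S t p := by
  intro h
  have hm := hS p hp
  rcases W_chain hS hm h with h | ⟨c, c1, c2, c3⟩
  · unfold Cap memP at *; omega
  · obtain ⟨hni, hci⟩ := chain_insert c2 (p := p) fun r hr => Or.inl (c3 r hr).1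
    have := hc (insert p c) (by
      intro r hr
      rcases Finset.mem_insert.1 (Finset.mem_coe.1 hr) with rfl | hr
      · exact hp
      · exact (c3 r hr).2) hci
    rw [Finset.card_insert_of_notMem hni, c1] at this
    omega

theorem W_low (hta : t < b) (hS : ∀ p ∈ S, memP a b p) {i : ℕ} {p : ℤ × ℤ}
    (h : W a b t S (i + 1) p) : 2 ≤ p.2 := by
  rcases h with ⟨q, hq, -, hs⟩ | h
  · have := hS q hq
    unfold slt memP at *; omega
  · unfold Cap at h; push_cast at h; omega

theorem W_high {i : ℕ} (hi : i + 1 ≤ t) {p : ℤ × ℤ} (hp : 2 * (b : ℤ) < p.2) :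
    W a b t S (i + 1) p := by
  right; left; push_cast; omega

theorem exists_H (hta : t < b) (hS : ∀ p ∈ S, memP a b p) {i : ℕ} (hi : i + 1 ≤ t) :
    ∃ H : ℤ → ℤ, ∀ x y, W a b t S (i + 1) (x, y) ↔ H x < y := by
  have : ∀ x : ℤ, ∃ m : ℤ, ∀ y, W a b t S (i + 1) (x, y) ↔ m < y := by
    intro x
    obtain ⟨m, hm, hm'⟩ := Int.exists_least_of_bdd (P := fun y => W a b t S (i + 1) (x, y))
      ⟨2, fun z hz => W_low hta hS hz⟩ ⟨2 * (b : ℤ) + 1, W_high hi (by dsimp only; omega)⟩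
    refine ⟨m - 1, fun y => ⟨fun hy => ?_, fun hy => ?_⟩⟩
    · have := hm' y hy; omega
    · exact W_weak hm le_rfl (by dsimp only; omega)
  choose H hH using this
  exact ⟨H, hH⟩

/-- The wrap-around statement at the ends of the path. -/
theorem exists_G (ha : 1 ≤ a) (hta : t < a) (hab : a ≤ b) (hS : ∀ p ∈ S, memP a b p) {i : ℕ}
    (hi : i + 1 ≤ t) :
    ∃ (G : ℤ → ℤ) (h : ℤ), Antitone G ∧ G 1 = b + h ∧ G (a + 1) = h ∧ 1 ≤ h ∧ h ≤ b ∧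
      (∀ p, Row a G p → ¬ W a b t S (i + 1) p) ∧
      (∀ p ∈ S, ¬ W a b t S (i + 1) p → W a b t S i p → Row a G p) ∧
      (∀ p, 1 ≤ i → Row a G p → W a b t S i p) := by
  obtain ⟨H, hH⟩ := exists_H (a := a) (by omega) hS hi
  have hHa : Antitone H := by
    intro x y hxy
    by_contra hcon
    push Not at hcon
    have := W_weak (q := (y, H y)) ((hH x (H y)).2 hcon) hxy le_rfl
    rw [hH] at this
    omega
  have hH1 : ¬ H 1 < (b : ℤ) + 1 := by
    rw [← hH]
    rintro (⟨q, hq, -, hs⟩ | h)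
    · have := hS q hq
      unfold slt memP at *; dsimp only at *; omega
    · unfold Cap at h; push_cast at h; omega
  have hH2 : H 1 < 2 * (b : ℤ) + 1 := by
    rw [← hH]; exact W_high hi (by dsimp only; omega)
  have hH3 : H 1 < b + (H a + 1) := by
    have h0 := (hH a (H a + 1)).2 (by omega)
    rw [← hH]
    have hlow := W_low (by omega) hS h0
    dsimp only at hlow
    rcases h0 with ⟨q, hq, hW, hs⟩ | h
    · by_cases hqb : q.2 ≤ b
      · left
        refine ⟨q, hq, hW, Or.inr ⟨hqb, ?_, ?_⟩⟩ <;> unfold slt at hs <;> dsimp only at * <;> omega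
      · apply W_high hi
        unfold slt at hs
        dsimp only at *
        omega
    · right; left
      unfold Cap at h
      push_cast at *
      omega
  refine ⟨fun x => if x ≤ a then H x else H 1 - b, H 1 - b, ?_, ?_, ?_, ?_, ?_, ?_, ?_, ?_⟩
  · intro x y hxy
    have e1 := hHa hxy
    dsimp only
    split_ifs with h1 h2 h2
    · exact e1
    · omega
    · have := hHa h2
      omega
    · exact le_rfl
  · dsimp only
    rw [if_pos (by omega)]; ring
  · dsimp only
    rw [if_neg (by omega)]
  · omega
  · omega
  · rintro ⟨x, y⟩ ⟨p1, p2, p3, p4⟩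
    dsimp only at *
    rw [if_pos p2] at p4
    rw [hH]
    omega
  · rintro ⟨x, y⟩ hp hnW hW
    have hm := hS _ hp
    unfold memP at hm
    dsimp only at hm
    rw [hH] at hnW
    refine ⟨hm.1, hm.2.1, ?_, ?_⟩ <;> dsimp only
    · split_ifs with hx
      · have : W a b t S (i + 1) (x + 1, y + 1) :=
          Or.inl ⟨_, hp, hW, Or.inl ⟨by dsimp only; omega, by dsimp only; omega⟩⟩
        rw [hH] at this
        omega
      · have : W a b t S (i + 1) (1, b + y + 1) := by
          by_cases hy : y ≤ b
          · refine Or.inl ⟨_, hp, hW, Or.inr ⟨hy, ?_, ?_⟩⟩ <;> dsimp only <;> omega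
          · apply W_high hi; dsimp only; omega
        rw [hH] at this
        omega
    · rw [if_pos hm.2.1]; omega
  · rintro ⟨x, y⟩ hi1 ⟨p1, p2, p3, p4⟩
    dsimp only at *
    obtain ⟨j, rfl⟩ : ∃ j, i = j + 1 := ⟨i - 1, by omega⟩
    split_ifs at p3 with hx
    · have h0 := (hH (x + 1) (y + 1)).2 (by omega)
      rcases h0 with ⟨q, hq, hW, hs | hs⟩ | h
      · exact W_weak hW (by dsimp only at *; omega) (by dsimp only at *; omega)
      · have hqm := hS q hq
        rcases hW with ⟨r, hr, hrW, hrs⟩ | h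
        · refine Or.inl ⟨r, hr, hrW, Or.inr ?_⟩
          unfold slt memP at *
          dsimp only at *
          omega
        · right; left
          unfold Cap memP at *
          push_cast at *
          omega
      · right
        unfold Cap at *
        push_cast at *
        omega
    · have hxa : x = a := by omega
      have h0 := (hH 1 (b + y + 1)).2 (by omega)
      rcases h0 with ⟨q, hq, hW, hs⟩ | h
      · have hqm := hS q hq
        unfold slt memP at *
        dsimp only at *
        exact W_weak hW (by dsimp only; omega) (by dsimp only; omega)
      · right
        unfold Cap at *
        push_cast at *
        omega

end

theorem stmt_16 (a b t : ℕ) (ha : 2 ≤ a) (hab : a ≤ b) (ht1 : 1 ≤ t) (hta : t ≤ a - 1)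
    (S : Set (ℤ × ℤ)) (hS : ∀ p ∈ S, memP a b p) :
    ((∀ c : Finset (ℤ × ℤ), (c : Set (ℤ × ℤ)) ⊆ S → IsChain (ple b) (c : Set (ℤ × ℤ)) →
        c.card ≤ t) ∧
      ∀ S' : Set (ℤ × ℤ), (∀ p ∈ S', memP a b p) →
        (∀ c : Finset (ℤ × ℤ), (c : Set (ℤ × ℤ)) ⊆ S' → IsChain (ple b) (c : Set (ℤ × ℤ)) →
          c.card ≤ t) → S ⊆ S' → S = S') ↔
    ∃ h : Fin t → ℕ, StrictMono h ∧ (∀ i, 1 ≤ h i ∧ h i ≤ b) ∧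
      ∃ l : Fin t → List (ℤ × ℤ),
        (∀ i, IsPathFromTo (l i) (1, (b : ℤ) + (h i : ℤ)) ((a : ℤ), (h i : ℤ))) ∧
        (∀ i j, i ≠ j → ∀ x, x ∈ l i → x ∉ l j) ∧
        S = ⋃ i, {x | x ∈ l i} := by
  constructor
  · rintro ⟨hc, hmax⟩
    have hex : ∀ i : Fin t, _ := fun i => exists_G (a := a) (b := b) (t := t) (S := S) (by omega)
      (by omega) hab hS (i := i) i.2
    choose G h hG h1 h2 h3 h4 hW1 hW2 hW3 using hex
    have habove : ∀ i j : Fin t, i < j → ∀ p, Row a (G j) p → W a b t S (i + 1) p := by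
      intro i j hij p hp
      have hij' : (i : ℕ) < j := hij
      exact W_anti (by omega) (hW3 j p (by omega) hp)
    have hdisj : ∀ i j : Fin t, i ≠ j → ∀ p, Row a (G i) p → ¬ Row a (G j) p := by
      intro i j hij p hp hp'
      rcases lt_or_gt_of_ne hij with hlt | hlt
      · exact hW1 i p hp (habove i j hlt p hp')
      · exact hW1 j p hp' (habove j i hlt p hp)
    have hmono : StrictMono h := by
      intro i j hij
      by_contra hcon
      push Not at hcon
      have r1 : Row a (G j) (1, b + h j) :=
        ⟨le_rfl, by dsimp only; omega, by rw [← h1]; exact hG j (by dsimp only; omega),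
          by rw [← h1]⟩
      have r2 : Row a (G i) (1, b + h i) :=
        ⟨le_rfl, by dsimp only; omega, by rw [← h1]; exact hG i (by dsimp only; omega),
          by rw [← h1]⟩
      exact hW1 i _ r2 (W_weak (habove i j hij _ r1) le_rfl (by dsimp only; omega))
    have hcover : ∀ p ∈ S, ∃ i, Row a (G i) p := by
      intro p hp
      by_contra hcon
      push Not at hcon
      have : ∀ n : ℕ, n ≤ t → W a b t S n p := by
        intro n
        induction n with
        | zero => intro _; trivial
        | succ n ih =>
          intro hn
          by_contra hnW
          exact hcon ⟨n, hn⟩ (hW2 ⟨n, hn⟩ p hp hnW (ih (by omega)))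
      exact W_top hS hc hp (this t le_rfl)
    have hpath : ∀ i : Fin t, ∃ l : List (ℤ × ℤ),
        IsPathFromTo l (1, (b : ℤ) + h i) ((a : ℤ), h i) ∧ ∀ x, x ∈ l ↔ Row a (G i) x := by
      intro i
      obtain ⟨l, hl, hm⟩ := rows_path (G i) (hG i) a
        (((a : ℤ) - 1) + (b + h i - G i (a + 1))).toNat 1 (b + h i) (by omega)
        (by rw [← h1]; exact hG i (by omega)) (by omega)
      rw [h2] at hl
      refine ⟨l, hl, fun x => ?_⟩
      rw [hm]
      unfold Row
      have := h1 i
      by_cases e : x.1 = 1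
      · rw [e]; omega
      · omega
    choose l hl hm using hpath
    have hcast : ∀ i, ((h i).toNat : ℤ) = h i := fun i => by
      have := h3 i; omega
    refine ⟨fun i => (h i).toNat, ?_, ?_, l, ?_, ?_, ?_⟩
    · intro i j hij
      have := hmono hij
      have := h3 i
      dsimp only
      omega
    · intro i
      have := h3 i
      have := h4 i
      dsimp only
      omega
    · intro i
      rw [hcast]
      exact hl i
    · intro i j hij x hx hx'
      rw [hm] at hx hx'
      exact hdisj i j hij x hx hx'
    · refine hmax _ ?_ ?_ ?_
      · intro p hp
        obtain ⟨i, hi⟩ := Set.mem_iUnion.1 hp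
        exact row_memP (hG i) (h1 i) (h2 i) ⟨h3 i, h4 i⟩ ((hm i p).1 hi)
      · intro c hcs hch
        refine union_no_chain hG h1 h2 c (fun p hp => ?_) hch
        obtain ⟨i, hi⟩ := Set.mem_iUnion.1 (hcs hp)
        exact ⟨i, (hm i p).1 hi⟩
      · intro p hp
        obtain ⟨i, hi⟩ := hcover p hp
        exact Set.mem_iUnion.2 ⟨i, (hm i p).2 hi⟩
  · rintro ⟨h, hmono, hh, l, hl, hd, rfl⟩
    have hex := fun i => path_rows _ _ _ (hl i)
    choose G hG h1 h2 h3 hm using hex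
    have hm' : ∀ i x, x ∈ l i ↔ Row a (G i) x := hm
    have hhz : ∀ i, 1 ≤ (h i : ℤ) ∧ (h i : ℤ) ≤ b := fun i => by
      have := hh i; omega
    refine ⟨?_, ?_⟩
    · intro c hcs hch
      refine union_no_chain (h := fun i => (h i : ℤ)) hG h1 h2 c (fun p hp => ?_) hch
      obtain ⟨i, hi⟩ := Set.mem_iUnion.1 (hcs hp)
      exact ⟨i, (hm' i p).1 hi⟩
    · intro S' hS' hc hsub
      refine Set.Subset.antisymm hsub fun p hp => ?_
      by_contra hcon
      obtain ⟨c, c1, c2, c3⟩ := union_maximal (a := a) (b := b) (by omega)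
        (h := fun i => (h i : ℤ)) hhz
        (fun i j hij => by have := hmono hij; dsimp only; omega) hG h1 h2
        (fun i j hij x hx hx' => hd i j hij x ((hm' i x).2 hx) ((hm' j x).2 hx')) p (hS' p hp)
        (fun i hi => hcon (Set.mem_iUnion.2 ⟨i, (hm' i p).2 hi⟩))
      have := hc c (by
        intro q hq
        rcases c3 q hq with rfl | ⟨i, hi⟩
        · exact hp
        · exact hsub (Set.mem_iUnion.2 ⟨i, (hm' i q).2 hi⟩)) c2
      omega
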